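/- There is an injective group homomorphism from ℤ × ℤ into Thompson's group V, the group of prefix replacement permutations of the Cantor set C = ℕ → Bool. -/

import Mathlib

/-- The Cantor set `C = ℕ → Bool`. -/
abbrev Cantor : Type := ℕ → Bool

/-- Prepend a finite word `a` to an element `ξ` of the Cantor set. -/
def prepend (a : List Bool) (ξ : Cantor) : Cantor :=
  fun n => if h : n < a.length then a.get ⟨n, h⟩ else ξ (n - a.length)

/-- A finite set of finite binary words is a complete antichain if distinct elements
are incomparable in the prefix order and every `ξ : ℕ → Bool` has an initial segment
lying in it. -/
def IsCompleteAntichain (A : Set (List Bool)) : Prop :=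
  A.Finite ∧
  (∀ a ∈ A, ∀ b ∈ A, a ≠ b → ¬ a <+: b) ∧
  (∀ ξ : Cantor, ∃ n : ℕ, (List.ofFn fun i : Fin n => ξ i) ∈ A)

/-- A permutation of the Cantor set is a prefix replacement map if it is given by
a bijection between two finite complete antichains of prefixes. -/
def IsPrefixReplacement (g : Equiv.Perm Cantor) : Prop :=
  ∃ A B : Set (List Bool), IsCompleteAntichain A ∧ IsCompleteAntichain B ∧
    ∃ σ : A ≃ B, ∀ (a : A) (ξ : Cantor), g (prepend a ξ) = prepend (σ a : List Bool) ξ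

/-!
With letters `0 = false` and `1 = true`, write `C = 0C ⊔ 1C`, so that `C ≃ C ⊕ C`. Reassociating
`(C ⊕ C) ⊕ C ≃ C ⊕ (C ⊕ C)` yields the element `00 ↦ 0, 01 ↦ 10, 1 ↦ 11` of `V`. It has infinite
order because it lengthens the word `1` to `11`, hence its `n`-th power replaces `1` by `1ⁿ⁺¹`. One
copy of `ℤ` acts on `0C` and the other on `1C` through powers of this element.

The definition of `V` through antichains is awkward to compose, so membership is tested on words of
a fixed length instead: `g` lies in `V` if and only if there is an `N` such that `g` replaces every
word of length `N` by some word. Given such replacements, the target words automatically form a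
complete antichain: `g` is injective, so they are pairwise incomparable, and `g` is surjective, so
they cover `C`.
-/

open Equiv (Perm)

theorem prepend_append (a b : List Bool) (ξ : Cantor) :
    prepend (a ++ b) ξ = prepend a (prepend b ξ) := by
  funext n
  simp only [prepend, List.length_append, List.get_eq_getElem, List.getElem_append]
  split_ifs <;> first | rfl | omega | (congr 1; omega)

theorem prepend_cons (b : Bool) (a : List Bool) (ξ : Cantor) :
    prepend (b :: a) ξ = prepend [b] (prepend a ξ) :=
  prepend_append [b] a ξ

theorem ofFn_prepend (a : List Bool) (ξ : Cantor) :
    (List.ofFn fun i : Fin a.length => prepend a ξ i) = a := by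
  apply List.ext_getElem <;> simp [prepend]

theorem prepend_ofFn (n : ℕ) (ξ : Cantor) :
    prepend (List.ofFn fun i : Fin n => ξ i) (fun k => ξ (k + n)) = ξ := by
  funext k
  simp only [prepend, List.length_ofFn, List.get_eq_getElem, List.getElem_ofFn]
  split_ifs with h
  · rfl
  · congr 1; omega

theorem ofFn_prefix_ofFn {α : Type*} (ξ : ℕ → α) {m n : ℕ} (h : m ≤ n) :
    (List.ofFn fun i : Fin m => ξ i) <+: List.ofFn fun i : Fin n => ξ i := by
  rw [List.prefix_iff_eq_take]
  apply List.ext_getElem <;> simp [h]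

theorem prefix_or_prefix_of_prepend_eq {a b : List Bool} {ξ η : Cantor}
    (h : prepend a ξ = prepend b η) : a <+: b ∨ b <+: a := by
  rw [← ofFn_prepend a ξ, ← ofFn_prepend b η, ← h]
  exact (le_total a.length b.length).imp (ofFn_prefix_ofFn _) (ofFn_prefix_ofFn _)

theorem prepend_right_injective (a : List Bool) : Function.Injective (prepend a) := by
  intro ξ η h
  funext n
  simpa [prepend] using congrFun h (n + a.length)

theorem eq_nil_of_prepend_eq_id {a : List Bool} (h : prepend a = id) : a = [] := by
  cases a with
  | nil => rfl
  | cons b a => simpa [prepend] using congrFun (congrFun h fun _ => !b) 0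

theorem prepend_injective : Function.Injective prepend := by
  have eq_of_isPrefix {a b : List Bool} (hab : a <+: b) (h : prepend a = prepend b) : a = b := by
    obtain ⟨t, rfl⟩ := hab
    have ht : prepend t = id := funext fun ξ => prepend_right_injective a <| by
      rw [← prepend_append, ← h, id]
    rw [eq_nil_of_prepend_eq_id ht, List.append_nil]
  intro a b h
  obtain hab | hba := prefix_or_prefix_of_prepend_eq (congrFun h fun _ => false)
  · exact eq_of_isPrefix hab h
  · exact (eq_of_isPrefix hba h.symm).symm

/-- `g` acts on the cone of the word `a` as the prefix replacement `a ↦ b`. -/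
def ReplacesPrefix (g : Perm Cantor) (a b : List Bool) : Prop :=
  ∀ ξ, g (prepend a ξ) = prepend b ξ

namespace ReplacesPrefix

variable {g h : Perm Cantor} {a b c : List Bool}

theorem one (a : List Bool) : ReplacesPrefix 1 a a := fun _ => rfl

theorem mul (hg : ReplacesPrefix g b c) (hh : ReplacesPrefix h a b) : ReplacesPrefix (g * h) a c :=
  fun ξ => by rw [Perm.mul_apply, hh, hg]

theorem append (hg : ReplacesPrefix g a b) (t : List Bool) :
    ReplacesPrefix g (a ++ t) (b ++ t) :=
  fun ξ => by rw [prepend_append, hg, prepend_append]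

theorem right_unique (hb : ReplacesPrefix g a b) (hc : ReplacesPrefix g a c) : b = c :=
  prepend_injective <| funext fun ξ => (hb ξ).symm.trans (hc ξ)

theorem pow_append_flatten {t : List Bool} (hg : ReplacesPrefix g a (a ++ t)) (n : ℕ) :
    ReplacesPrefix (g ^ n) a (a ++ (List.replicate n t).flatten) := by
  induction n with
  | zero => simpa using one a
  | succ n ih =>
    rw [pow_succ, List.replicate_succ', List.flatten_concat, ← List.append_assoc]
    exact (ih.append t).mul hg

theorem not_isOfFinOrder {t : List Bool} (hg : ReplacesPrefix g a (a ++ t)) (ht : t ≠ []) :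
    ¬ IsOfFinOrder g := by
  rw [isOfFinOrder_iff_pow_eq_one]
  rintro ⟨n, hn, hgn⟩
  have heq : a ++ (List.replicate n t).flatten = a :=
    (hg.pow_append_flatten n).right_unique (hgn ▸ one a)
  simp [hn.ne', ht] at heq

end ReplacesPrefix

namespace IsCompleteAntichain

variable {A : Set (List Bool)}

theorem eq_of_prepend_eq (hA : IsCompleteAntichain A) {a b : List Bool} (ha : a ∈ A) (hb : b ∈ A)
    {ξ η : Cantor} (h : prepend a ξ = prepend b η) : a = b := by
  by_contra hab
  obtain hpre | hpre := prefix_or_prefix_of_prepend_eq h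
  · exact hA.2.1 a ha b hb hab hpre
  · exact hA.2.1 b hb a ha (Ne.symm hab) hpre

theorem exists_eq_prepend (hA : IsCompleteAntichain A) (ξ : Cantor) :
    ∃ a ∈ A, ∃ η, ξ = prepend a η :=
  let ⟨n, hn⟩ := hA.2.2 ξ
  ⟨_, hn, _, (prepend_ofFn n ξ).symm⟩

theorem exists_prefix_of_length_le (hA : IsCompleteAntichain A) :
    ∃ N, ∀ w : List Bool, N ≤ w.length → ∃ a ∈ A, a <+: w := by
  obtain ⟨N, hN⟩ := (hA.1.image List.length).bddAbove
  refine ⟨N, fun w hw => ?_⟩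
  obtain ⟨n, hn⟩ := hA.2.2 (prepend w fun _ => false)
  have hnN : n ≤ N := hN ⟨_, hn, List.length_ofFn⟩
  refine ⟨_, hn, ?_⟩
  conv_rhs => rw [← ofFn_prepend w fun _ => false]
  exact ofFn_prefix_ofFn _ (hnN.trans hw)

theorem setOf_length_eq (N : ℕ) : IsCompleteAntichain {w | w.length = N} := by
  refine ⟨List.finite_length_eq Bool N, fun a ha b hb hab hpre => ?_, fun ξ => ⟨N, by simp⟩⟩
  exact hab (hpre.eq_of_length (ha.trans hb.symm))

section Replacement

variable {g : Perm Cantor} {u : A → List Bool}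

theorem eq_of_prefix_of_replacesPrefix (hA : IsCompleteAntichain A)
    (hu : ∀ a : A, ReplacesPrefix g a (u a)) {a b : A} (hab : u a <+: u b) : a = b := by
  obtain ⟨t, ht⟩ := hab
  let ξ : Cantor := fun _ => false
  have himage : g (prepend a (prepend t ξ)) = g (prepend b ξ) := by
    rw [hu, hu, ← ht, prepend_append]
  exact Subtype.ext (hA.eq_of_prepend_eq a.2 b.2 (g.injective himage))

theorem range_of_replacesPrefix (hA : IsCompleteAntichain A)
    (hu : ∀ a : A, ReplacesPrefix g a (u a)) : IsCompleteAntichain (Set.range u) := by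
  have : Finite A := hA.1
  refine ⟨Set.finite_range u, ?_, fun ξ => ?_⟩
  · rintro _ ⟨a, rfl⟩ _ ⟨b, rfl⟩ hab hpre
    exact hab (congrArg u (hA.eq_of_prefix_of_replacesPrefix hu hpre))
  · obtain ⟨a, ha, η, hη⟩ := hA.exists_eq_prepend (g.symm ξ)
    obtain rfl : prepend (u ⟨a, ha⟩) η = ξ := by
      rw [← hu ⟨a, ha⟩, ← hη, Equiv.apply_symm_apply]
    exact ⟨_, ⟨a, ha⟩, (ofFn_prepend _ η).symm⟩

theorem isPrefixReplacement (hA : IsCompleteAntichain A)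
    (hg : ∀ a ∈ A, ∃ b, ReplacesPrefix g a b) : IsPrefixReplacement g := by
  choose u hu using fun a : A => hg a a.2
  have hinj : Function.Injective u := fun a b hab =>
    hA.eq_of_prefix_of_replacesPrefix hu (hab ▸ List.prefix_rfl)
  exact ⟨A, Set.range u, hA, hA.range_of_replacesPrefix hu, Equiv.ofInjective u hinj, hu⟩

end Replacement

end IsCompleteAntichain

namespace IsPrefixReplacement

variable {g h : Perm Cantor}

theorem of_forall_length_eq (N : ℕ)
    (hg : ∀ w : List Bool, w.length = N → ∃ u, ReplacesPrefix g w u) : IsPrefixReplacement g :=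
  (IsCompleteAntichain.setOf_length_eq N).isPrefixReplacement hg

theorem exists_forall_length_le (hg : IsPrefixReplacement g) :
    ∃ N, ∀ w : List Bool, N ≤ w.length → ∃ u, ReplacesPrefix g w u := by
  obtain ⟨A, B, hA, -, σ, hσ⟩ := hg
  obtain ⟨N, hN⟩ := hA.exists_prefix_of_length_le
  refine ⟨N, fun w hw => ?_⟩
  obtain ⟨a, ha, t, rfl⟩ := hN w hw
  exact ⟨_, ReplacesPrefix.append (hσ ⟨a, ha⟩) t⟩

theorem one : IsPrefixReplacement 1 :=
  of_forall_length_eq 0 fun w _ => ⟨w, .one w⟩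

theorem inv (hg : IsPrefixReplacement g) : IsPrefixReplacement g⁻¹ := by
  obtain ⟨A, B, hA, hB, σ, hσ⟩ := hg
  refine ⟨B, A, hB, hA, σ.symm, fun b ξ => ?_⟩
  rw [Perm.inv_eq_iff_eq, hσ, Equiv.apply_symm_apply]

theorem mul (hg : IsPrefixReplacement g) (hh : IsPrefixReplacement h) :
    IsPrefixReplacement (g * h) := by
  obtain ⟨M, hM⟩ := hg.exists_forall_length_le
  obtain ⟨N, hN⟩ := hh.exists_forall_length_le
  refine of_forall_length_eq (N + M) fun w hw => ?_
  obtain ⟨u, hu⟩ := hN (w.take N) (by simp [hw])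
  -- The last `M` letters of `w` survive `h`, so the intermediate word is long enough for `g`.
  obtain ⟨v, hv⟩ := hM (u ++ w.drop N) (by simp [hw])
  have hhw : ReplacesPrefix h w (u ++ w.drop N) := by
    simpa only [List.take_append_drop] using hu.append (w.drop N)
  exact ⟨v, hv.mul hhw⟩

end IsPrefixReplacement

/-- Thompson's group `V` as a subgroup of the permutations of the Cantor set. -/
def thompsonV : Subgroup (Perm Cantor) where
  carrier := {g | IsPrefixReplacement g}
  one_mem' := .one
  mul_mem' := .mul
  inv_mem' := .inv

/-- The decomposition `C = 0C ⊔ 1C`: the left summand is the cone of `0` and the right summand is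
the cone of `1`. -/
def cantorSumEquiv : Cantor ⊕ Cantor ≃ Cantor where
  toFun := Sum.elim (prepend [false]) (prepend [true])
  invFun ξ := bif ξ 0 then .inr (fun n => ξ (n + 1)) else .inl (fun n => ξ (n + 1))
  left_inv := by rintro (ξ | ξ) <;> simp [prepend]
  right_inv ξ := by
    cases h : ξ 0 <;> funext n <;> cases n <;> simp [prepend, h]

theorem prepend_false_cons (a : List Bool) (ξ : Cantor) :
    prepend (false :: a) ξ = cantorSumEquiv (.inl (prepend a ξ)) :=
  prepend_cons false a ξ

theorem prepend_true_cons (a : List Bool) (ξ : Cantor) :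
    prepend (true :: a) ξ = cantorSumEquiv (.inr (prepend a ξ)) :=
  prepend_cons true a ξ

/-- The homomorphism letting a pair of permutations act on the cones of `0` and `1` respectively. -/
def conePermHom : Perm Cantor × Perm Cantor →* Perm Cantor :=
  cantorSumEquiv.permCongrHom.toMonoidHom.comp (Perm.sumCongrHom Cantor Cantor)

theorem conePermHom_injective : Function.Injective conePermHom :=
  cantorSumEquiv.permCongrHom.injective.comp Perm.sumCongrHom_injective

theorem conePermHom_apply_cantorSumEquiv (p : Perm Cantor × Perm Cantor) (x : Cantor ⊕ Cantor) :
    conePermHom p (cantorSumEquiv x) = cantorSumEquiv (x.map p.1 p.2) :=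
  congrArg (fun y => cantorSumEquiv (Sum.map p.1 p.2 y)) (cantorSumEquiv.symm_apply_apply x)

namespace ReplacesPrefix

variable {g : Perm Cantor} {a b : List Bool}

theorem conePermHom_false_cons (hg : ReplacesPrefix g a b) (h : Perm Cantor) :
    ReplacesPrefix (conePermHom (g, h)) (false :: a) (false :: b) := fun ξ => by
  rw [prepend_false_cons, conePermHom_apply_cantorSumEquiv, Sum.map_inl, hg, prepend_false_cons]

theorem conePermHom_true_cons (hg : ReplacesPrefix g a b) (h : Perm Cantor) :
    ReplacesPrefix (conePermHom (h, g)) (true :: a) (true :: b) := fun ξ => by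
  rw [prepend_true_cons, conePermHom_apply_cantorSumEquiv, Sum.map_inr, hg, prepend_true_cons]

end ReplacesPrefix

theorem conePermHom_mem_thompsonV {g h : Perm Cantor} (hg : g ∈ thompsonV) (hh : h ∈ thompsonV) :
    conePermHom (g, h) ∈ thompsonV := by
  obtain ⟨M, hM⟩ := hg.exists_forall_length_le
  obtain ⟨N, hN⟩ := hh.exists_forall_length_le
  refine IsPrefixReplacement.of_forall_length_eq (max M N + 1) fun w hw => ?_
  match w, hw with
  | false :: w, hw =>
    obtain ⟨u, hu⟩ := hM w (by grind)
    exact ⟨false :: u, hu.conePermHom_false_cons h⟩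
  | true :: w, hw =>
    obtain ⟨u, hu⟩ := hN w (by grind)
    exact ⟨true :: u, hu.conePermHom_true_cons g⟩

/-- The element of Thompson's group obtained from the associativity `(C ⊕ C) ⊕ C ≃ C ⊕ (C ⊕ C)` by
splitting the cone of `0` on the source and the cone of `1` on the target. -/
def cantorReassoc : Perm Cantor :=
  cantorSumEquiv.symm.trans <| (Equiv.sumCongr cantorSumEquiv.symm (Equiv.refl _)).trans <|
    (Equiv.sumAssoc _ _ _).trans <| (Equiv.sumCongr (Equiv.refl _) cantorSumEquiv).trans
      cantorSumEquiv

theorem replacesPrefix_cantorReassoc_false_false :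
    ReplacesPrefix cantorReassoc [false, false] [false] := fun ξ => by
  simp [cantorReassoc, prepend_false_cons]

theorem replacesPrefix_cantorReassoc_false_true :
    ReplacesPrefix cantorReassoc [false, true] [true, false] := fun ξ => by
  simp [cantorReassoc, prepend_false_cons, prepend_true_cons]

theorem replacesPrefix_cantorReassoc_true :
    ReplacesPrefix cantorReassoc [true] [true, true] := fun ξ => by
  simp [cantorReassoc, prepend_true_cons]

theorem cantorReassoc_mem_thompsonV : cantorReassoc ∈ thompsonV := by
  refine IsPrefixReplacement.of_forall_length_eq 2 fun w hw => ?_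
  match w, hw with
  | [false, false], _ => exact ⟨_, replacesPrefix_cantorReassoc_false_false⟩
  | [false, true], _ => exact ⟨_, replacesPrefix_cantorReassoc_false_true⟩
  | [true, c], _ => exact ⟨_, replacesPrefix_cantorReassoc_true.append [c]⟩

theorem not_isOfFinOrder_cantorReassoc : ¬ IsOfFinOrder cantorReassoc :=
  replacesPrefix_cantorReassoc_true.not_isOfFinOrder (t := [true]) (List.cons_ne_nil _ _)

/-- There is an injective group homomorphism from `ℤ × ℤ` into Thompson's group `V`,
the group of prefix replacement permutations of the Cantor set. -/
theorem Z_times_Z_embeds_in_V :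
    ∃ φ : Multiplicative (ℤ × ℤ) →* Equiv.Perm Cantor,
      Function.Injective φ ∧ ∀ x, IsPrefixReplacement (φ x) := by
  let power : Multiplicative ℤ →* Perm Cantor := zpowersHom _ cantorReassoc
  have power_injective : Function.Injective power :=
    injective_zpow_iff_not_isOfFinOrder.2 not_isOfFinOrder_cantorReassoc
  have power_mem (n : Multiplicative ℤ) : power n ∈ thompsonV :=
    zpow_mem cantorReassoc_mem_thompsonV n.toAdd
  let toProd := MulEquiv.prodMultiplicative ℤ ℤ
  refine ⟨(conePermHom.comp (power.prodMap power)).comp toProd.toMonoidHom, ?_, fun x => ?_⟩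
  · exact (conePermHom_injective.comp (power_injective.prodMap power_injective)).comp
      toProd.injective
  · exact conePermHom_mem_thompsonV (power_mem (toProd x).1) (power_mem (toProd x).2)
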